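/- If (T,Y) is relatively hypercyclic then (T,Y) is topologically transitive: for nonempty relatively open subsets U, V of Y there exists n ≥ 0 with T^n(U) ∩ V ≠ ∅. -/

import Mathlib

open Set Filter Topology

variable {X : Type*} [NormedAddCommGroup X] [NormedSpace ℝ X] [CompleteSpace X]

/-- The natural domain of the n-th power of an operator `T` with domain `D`:
`D(T^0) = X`, `D(T^{n+1}) = {x ∈ D(T^n) : T^n x ∈ D}`. -/
def pdom (D : Submodule ℝ X) (T : X →ₗ[ℝ] X) : ℕ → Set X
  | 0 => Set.univ
  | n + 1 => {x | x ∈ pdom D T n ∧ (⇑T)^[n] x ∈ (D : Set X)}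

/-- `Y0 = ⋂_{n ≥ 1} D(T^n)`, the maximal dynamical domain. -/
def Y0 (D : Submodule ℝ X) (T : X →ₗ[ℝ] X) : Set X := ⋂ n : ℕ, pdom D T (n + 1)

/-- The orbit of `x` under `T`. -/
def orb (T : X →ₗ[ℝ] X) (x : X) : Set X := Set.range fun n : ℕ => (⇑T)^[n] x

/-- The set of hypercyclic vectors of `T`. -/
def HCset (D : Submodule ℝ X) (T : X →ₗ[ℝ] X) : Set X :=
  {x | x ∈ Y0 D T ∧ Dense (orb T x)}

/-- The set of relatively hypercyclic vectors of `(T, Y)`. -/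
def RHCset (D : Submodule ℝ X) (T : X →ₗ[ℝ] X) (Y : Set X) : Set X :=
  {x | x ∈ Y0 D T ∧ x ≠ 0 ∧ Y ⊆ closure (orb T x ∩ Y)}

/-- `(T, Y)` is topologically transitive (w.r.t. the subspace topology on `Y`). -/
def TT (T : X →ₗ[ℝ] X) (Y : Set X) : Prop :=
  ∀ G H : Set X, IsOpen G → IsOpen H → (G ∩ Y).Nonempty → (H ∩ Y).Nonempty →
    ∃ n : ℕ, ((⇑T)^[n] '' (G ∩ Y) ∩ (H ∩ Y)).Nonempty

/-- `(T, Y)` is mixing. -/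
def Mixing (T : X →ₗ[ℝ] X) (Y : Set X) : Prop :=
  ∀ G H : Set X, IsOpen G → IsOpen H → (G ∩ Y).Nonempty → (H ∩ Y).Nonempty →
    ∃ N : ℕ, ∀ n ≥ N, ((⇑T)^[n] '' (G ∩ Y) ∩ (H ∩ Y)).Nonempty

/-- `(T, Y)` is strongly topologically transitive. -/
def STT (T : X →ₗ[ℝ] X) (Y : Set X) : Prop :=
  ∀ G : Set X, IsOpen G → (G ∩ Y).Nonempty →
    Y \ {0} ⊆ ⋃ n : ℕ, (⇑T)^[n] '' (G ∩ Y)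

/-- `(T, Y)` is hypermixing. -/
def HM (T : X →ₗ[ℝ] X) (Y : Set X) : Prop :=
  ∀ G : Set X, IsOpen G → (G ∩ Y).Nonempty →
    Y \ {0} ⊆ ⋃ i : ℕ, ⋂ n : ℕ, ⋂ (_ : i ≤ n), (⇑T)^[n] '' (G ∩ Y)

/-- `(T, Y)` is supermixing. -/
def SM (T : X →ₗ[ℝ] X) (Y : Set X) : Prop :=
  ∀ G : Set X, IsOpen G → (G ∩ Y).Nonempty →
    Y ⊆ closure ((⋃ i : ℕ, ⋂ n : ℕ, ⋂ (_ : i ≤ n), (⇑T)^[n] '' (G ∩ Y)) ∩ Y)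

/-- The generalized kernel `GK(T) = ⋃_{n ≥ 1} Ker T^n`. -/
def GK (D : Submodule ℝ X) (T : X →ₗ[ℝ] X) : Set X :=
  ⋃ n : ℕ, {x | x ∈ pdom D T (n + 1) ∧ (⇑T)^[n + 1] x = 0}

/-!
If `Y ≠ 0`, then `Y` has no isolated points, so deleting the finitely many iterates `T^k x` with
`k < n` from an orbit that is dense relative to `Y` leaves a set dense relative to `Y`. Given
relatively open sets `U` and `V`, some iterate `T^n x` lies in `U` and a later one `T^m x`, with
`m ≥ n`, lies in `V`, so `T^(m - n)` sends a point of `U` into `V`.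
-/

section Transitivity

variable {α : Type*} [TopologicalSpace α] {f : α → α} {s : Set α}

/-- Topological transitivity of `f` relative to `s`: any two nonempty relatively open subsets of
`s` are joined by an iterate of `f`. Relatively open sets are written as traces of open sets of the
ambient space, and `s` is not required to be invariant under `f`. -/
def IsTopologicallyTransitiveOn (f : α → α) (s : Set α) : Prop :=
  ∀ U V : Set α, IsOpen U → IsOpen V → (U ∩ s).Nonempty → (V ∩ s).Nonempty →
    ∃ n : ℕ, (f^[n] '' (U ∩ s) ∩ (V ∩ s)).Nonempty

theorem isTopologicallyTransitiveOn_of_subsingleton (hs : s.Subsingleton) :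
    IsTopologicallyTransitiveOn f s := by
  rintro U V - - ⟨x, hxU, hxs⟩ ⟨y, hyV, hys⟩
  obtain rfl := hs hxs hys
  exact ⟨0, x, mem_image_of_mem _ ⟨hxU, hxs⟩, hyV, hys⟩

theorem isTopologicallyTransitiveOn_of_subset_closure_image_Ici {x : α}
    (hx : ∀ n : ℕ, s ⊆ closure ((f^[·] x) '' Ici n ∩ s)) :
    IsTopologicallyTransitiveOn f s := by
  rintro U V hU hV ⟨y, hyU, hys⟩ ⟨z, hzV, hzs⟩
  obtain ⟨_, hnU, ⟨n, -, rfl⟩, hns⟩ := mem_closure_iff.1 (hx 0 hys) U hU hyU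
  obtain ⟨_, hmV, ⟨m, hnm, rfl⟩, hms⟩ := mem_closure_iff.1 (hx n hzs) V hV hzV
  have hshift : f^[m - n] (f^[n] x) = f^[m] x := by
    rw [← Function.iterate_add_apply, Nat.sub_add_cancel hnm]
  exact ⟨m - n, f^[m] x, ⟨f^[n] x, ⟨hnU, hns⟩, hshift⟩, hmV, hms⟩

end Transitivity

section Preperfect

variable {α : Type*} [TopologicalSpace α] [T1Space α] {s : Set α}

theorem subset_closure_sdiff_of_preperfect {A F : Set α} (hs : Preperfect s)
    (hA : s ⊆ closure A) (hF : F.Finite) : s ⊆ closure (A \ F) := by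
  refine fun y hy ↦ mem_closure_iff.2 fun U hU hyU ↦ ?_
  have hinf : (U ∩ s).Infinite := .of_accPt (hs.open_inter hU y ⟨hyU, hy⟩)
  obtain ⟨z, ⟨hzU, hzs⟩, hzF⟩ := hinf.exists_notMem_finite hF
  obtain ⟨w, ⟨hwU, hwF⟩, hwA⟩ :=
    mem_closure_iff.1 (hA hzs) (U \ F) (hU.sdiff hF.isClosed) ⟨hzU, hzF⟩
  exact ⟨w, hwU, hwA, hwF⟩

theorem subset_closure_image_Ici_inter_of_preperfect {u : ℕ → α} (hs : Preperfect s)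
    (hu : s ⊆ closure (range u ∩ s)) (n : ℕ) : s ⊆ closure (u '' Ici n ∩ s) := by
  refine (subset_closure_sdiff_of_preperfect hs hu ((finite_Iio n).image u)).trans
    (closure_mono ?_)
  rintro _ ⟨⟨⟨k, rfl⟩, hks⟩, hkn⟩
  have hnk : n ≤ k := not_lt.1 fun hlt ↦ hkn (mem_image_of_mem u hlt)
  exact ⟨mem_image_of_mem u hnk, hks⟩

theorem isTopologicallyTransitiveOn_of_preperfect {f : α → α} {x : α} (hs : Preperfect s)
    (hx : s ⊆ closure (range (f^[·] x) ∩ s)) : IsTopologicallyTransitiveOn f s :=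
  isTopologicallyTransitiveOn_of_subset_closure_image_Ici
    (subset_closure_image_Ici_inter_of_preperfect hs hx)

end Preperfect

section Submodule

variable {R M : Type*} [Ring R] [IsDomain R] [TopologicalSpace R] [NeBot (𝓝[≠] (0 : R))]
  [AddCommGroup M] [Module R M] [Module.IsTorsionFree R M] [TopologicalSpace M]
  [IsTopologicalAddGroup M] [ContinuousSMul R M]

theorem preperfect_submodule_of_ne_bot {Y : Submodule R M} (hY : Y ≠ ⊥) :
    Preperfect (Y : Set M) := by
  intro y hy
  have : Nontrivial Y := Submodule.nontrivial_iff_ne_bot.2 hY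
  have hacc : AccPt (⟨y, hy⟩ : Y) ⊤ := by
    simpa only [AccPt, inf_top_eq] using Module.punctured_nhds_neBot R Y ⟨y, hy⟩
  simpa using
    hacc.map continuous_subtype_val.continuousAt Subtype.val_injective

theorem stmt7_general [T1Space M] {f : M → M} {x : M} {Y : Submodule R M}
    (hx : (Y : Set M) ⊆ closure (range (f^[·] x) ∩ Y)) :
    IsTopologicallyTransitiveOn f (Y : Set M) := by
  obtain rfl | hY := eq_or_ne Y ⊥
  · exact isTopologicallyTransitiveOn_of_subsingleton subsingleton_singleton
  · exact isTopologicallyTransitiveOn_of_preperfect (preperfect_submodule_of_ne_bot hY) hx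

end Submodule

/-- `RHC ⇒ TT`: relative hypercyclicity of `(T, Y)` implies topological
transitivity of `(T, Y)`. -/
theorem stmt7 [TopologicalSpace.SeparableSpace X] (hinf : ¬ FiniteDimensional ℝ X)
    (D : Submodule ℝ X) (T : X →ₗ[ℝ] X) (Y : Submodule ℝ X)
    (hY : (Y : Set X) ⊆ Y0 D T)
    (hrhc : (RHCset D T (Y : Set X)).Nonempty) :
    TT T (Y : Set X) := by
  obtain ⟨x, -, -, hx⟩ := hrhc
  exact stmt7_general hx
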